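/- arXiv:1801.07541 — 2 statements merged into one kernel-verified Lean document; each statement's English description precedes it below -/
import Mathlib

section
/- Let a, b be positive integers and let w ≤ a, h ≤ b be positive reals. Let R be a finite family of rectangles, each of width at most w and height at most h. Then there exist a subfamily R' ⊆ R and a feasible packing of R' into the bin [0,a]×[0,b] such that either R' = R or a(R') ≥ (a−w)·(b−h). -/
open scoped Classical

/-- Open axis-aligned rectangles `(x₁, x₁+w₁) × (y₁, y₁+h₁)` and `(x₂, x₂+w₂) × (y₂, y₂+h₂)`
are disjoint. -/
def RectDisjoint (x₁ y₁ w₁ h₁ x₂ y₂ w₂ h₂ : ℕ) : Prop :=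
  x₁ + w₁ ≤ x₂ ∨ x₂ + w₂ ≤ x₁ ∨ y₁ + h₁ ≤ y₂ ∨ y₂ + h₂ ≤ y₁

theorem row_positions {ι : Type*} (wd : ι → ℕ) (T : Finset ι) :
    ∃ x : ι → ℕ, (∀ i ∈ T, x i + wd i ≤ ∑ j ∈ T, wd j) ∧
      ∀ i ∈ T, ∀ j ∈ T, i ≠ j → x i + wd i ≤ x j ∨ x j + wd j ≤ x i := by
  induction T using Finset.induction_on with
  | empty => exact ⟨fun _ => 0, by simp, by simp⟩
  | insert t T ht ih =>
    obtain ⟨x, h1, h2⟩ := ih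
    refine ⟨fun i => if i = t then ∑ j ∈ T, wd j else x i, ?_, ?_⟩
    · intro i hi
      rw [Finset.sum_insert ht]
      by_cases hit : i = t
      · simp [hit]; omega
      · have := h1 i (Finset.mem_of_mem_insert_of_ne hi hit)
        simp [hit]; omega
    · intro i hi j hj hij
      by_cases hit : i = t
      · have hjt : j ≠ t := fun e => hij (hit.trans e.symm)
        have := h1 j (Finset.mem_of_mem_insert_of_ne hj hjt)
        simp [hit, hjt]; omega
      · have hi' := Finset.mem_of_mem_insert_of_ne hi hit
        by_cases hjt : j = t
        · have := h1 i hi'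
          simp [hit, hjt]; omega
        · simpa [hit, hjt] using h2 i hi' j (Finset.mem_of_mem_insert_of_ne hj hjt) hij

theorem row_exists {ι : Type*} (wd ht : ι → ℕ) (a : ℕ) (R : Finset ι) :
    ∃ T ⊆ R, ∑ j ∈ T, wd j ≤ a ∧ (∀ t ∈ T, ∀ r ∈ R \ T, ht r ≤ ht t) ∧
      (T = R ∨ ∃ r ∈ R \ T, a < ∑ j ∈ T, wd j + wd r) := by
  let F := R.powerset.filter (fun T => ∑ j ∈ T, wd j ≤ a ∧ ∀ t ∈ T, ∀ r ∈ R \ T, ht r ≤ ht t)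
  have hF : F.Nonempty := ⟨∅, by simp [F]⟩
  obtain ⟨T, hT, hmax⟩ := F.exists_max_image Finset.card hF
  have hT0 := hT
  simp only [F, Finset.mem_filter, Finset.mem_powerset] at hT
  obtain ⟨hTR, hTa, hTh⟩ := hT
  refine ⟨T, hTR, hTa, hTh, ?_⟩
  by_cases hne : T = R
  · exact Or.inl hne
  right
  have hn : (R \ T).Nonempty := by
    rw [Finset.sdiff_nonempty]
    exact fun hh => hne (Finset.Subset.antisymm hTR hh)
  obtain ⟨r, hr, hrmax⟩ := (R \ T).exists_max_image ht hn
  refine ⟨r, hr, ?_⟩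
  by_contra hcon
  have hr' := Finset.mem_sdiff.1 hr
  have hin : insert r T ∈ F := by
    simp only [F, Finset.mem_filter, Finset.mem_powerset]
    refine ⟨Finset.insert_subset hr'.1 hTR, ?_, ?_⟩
    · rw [Finset.sum_insert hr'.2]; omega
    · intro t ht' q hq
      have hq' : q ∈ R \ T := by
        simp only [Finset.mem_sdiff, Finset.mem_insert, not_or] at hq ⊢
        exact ⟨hq.1, hq.2.2⟩
      rcases Finset.mem_insert.1 ht' with rfl | ht'
      · exact hrmax q hq'
      · exact hTh t ht' q hq'
  have := hmax _ hin
  rw [Finset.card_insert_of_notMem hr'.2] at this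
  omega

theorem nfdh_aux {ι : Type*} (wd ht : ι → ℕ) (a : ℕ) (w : ℝ) (hwa : w ≤ a)
    (hw : ∀ i, (wd i : ℝ) ≤ w) (n : ℕ) :
    ∀ (R : Finset ι), R.card ≤ n → ∀ (b : ℕ) (H : ℝ), (∀ i ∈ R, (ht i : ℝ) ≤ H) →
    ∃ (S : Finset ι) (x y : ι → ℕ), S ⊆ R ∧
      (∀ i ∈ S, x i + wd i ≤ a ∧ y i + ht i ≤ b) ∧
      (∀ i ∈ S, ∀ j ∈ S, i ≠ j →
        RectDisjoint (x i) (y i) (wd i) (ht i) (x j) (y j) (wd j) (ht j)) ∧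
      (S = R ∨ ((a : ℝ) - w) * ((b : ℝ) - H) ≤ ∑ i ∈ S, (wd i : ℝ) * ht i) := by
  induction n with
  | zero =>
    intro R hR b H _
    have : R = ∅ := by simpa using hR
    exact ⟨∅, fun _ => 0, fun _ => 0, by simp, by simp, by simp, Or.inl this.symm⟩
  | succ n ih =>
    intro R hR b H hH
    have haw : 0 ≤ (a : ℝ) - w := by linarith
    rcases R.eq_empty_or_nonempty with rfl | hRn
    · exact ⟨∅, fun _ => 0, fun _ => 0, by simp, by simp, by simp, Or.inl rfl⟩
    obtain ⟨m, hm, hmmax⟩ := R.exists_max_image ht hRn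
    by_cases hmb : b < ht m
    · refine ⟨∅, fun _ => 0, fun _ => 0, by simp, by simp, by simp, Or.inr ?_⟩
      have h1 := hH m hm
      have h2 : (b : ℝ) < ht m := by exact_mod_cast hmb
      simp only [Finset.sum_empty]
      exact mul_nonpos_of_nonneg_of_nonpos haw (by linarith)
    push Not at hmb
    obtain ⟨T, hTR, hTa, hTh, hT⟩ := row_exists wd ht a R
    obtain ⟨x₁, hx1, hx2⟩ := row_positions wd T
    rcases hT with rfl | ⟨r, hr, hra⟩
    · refine ⟨T, x₁, fun _ => 0, subset_rfl, ?_, ?_, Or.inl rfl⟩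
      · intro i hi
        have := hx1 i hi
        have := hmmax i hi
        constructor
        · omega
        · simp only; omega
      · intro i hi j hj hij
        have := hx2 i hi j hj hij
        unfold RectDisjoint
        omega
    have hra' : (a : ℝ) - w < ∑ j ∈ T, (wd j : ℝ) := by
      have h1 : (a : ℝ) < ∑ j ∈ T, (wd j : ℝ) + wd r := by exact_mod_cast hra
      have h2 := hw r
      linarith
    have hTn : T.Nonempty := by
      rcases T.eq_empty_or_nonempty with rfl | h
      · simp at hra'; linarith
      · exact h
    obtain ⟨q, hq, hqmax⟩ := (R \ T).exists_max_image ht ⟨r, hr⟩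
    have hcard : (R \ T).card ≤ n := by
      have h1 := Finset.card_sdiff_add_card_eq_card hTR
      have h2 := hTn.card_pos
      omega
    obtain ⟨S, x₂, y₂, hSR, hSb, hSd, hSa⟩ := ih (R \ T) hcard (b - ht m) (ht q)
      (fun i hi => by exact_mod_cast hqmax i hi)
    have hST : ∀ i ∈ S, i ∉ T := fun i hi => (Finset.mem_sdiff.1 (hSR hi)).2
    have hdisj : Disjoint T S := Finset.disjoint_right.2 hST
    refine ⟨T ∪ S, fun i => if i ∈ T then x₁ i else x₂ i,
      fun i => if i ∈ T then 0 else ht m + y₂ i,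
      Finset.union_subset hTR (hSR.trans Finset.sdiff_subset), ?_, ?_, ?_⟩
    · intro i hi
      by_cases hiT : i ∈ T
      · have h1 := hx1 i hiT
        have h2 := hmmax i (hTR hiT)
        simp only [hiT, if_true]
        omega
      · have hiS : i ∈ S := by simpa [hiT] using hi
        have h1 := hSb i hiS
        simp only [hiT, if_false]
        omega
    · intro i hi j hj hij
      by_cases hiT : i ∈ T
      · have h2 := hmmax i (hTR hiT)
        by_cases hjT : j ∈ T
        · have := hx2 i hiT j hjT hij
          simp only [RectDisjoint, hiT, hjT, if_true]
          omega
        · simp only [RectDisjoint, hiT, hjT, if_true, if_false]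
          omega
      · have hiS : i ∈ S := by simpa [hiT] using hi
        by_cases hjT : j ∈ T
        · have h2 := hmmax j (hTR hjT)
          simp only [RectDisjoint, hiT, hjT, if_true, if_false]
          omega
        · have hjS : j ∈ S := by simpa [hjT] using hj
          have := hSd i hiS j hjS hij
          simp only [RectDisjoint, hiT, hjT, if_false] at this ⊢
          omega
    · rcases hSa with rfl | hSa
      · left
        exact Finset.union_sdiff_of_subset hTR
      · right
        rw [Finset.sum_union hdisj]
        have h1 : ((a : ℝ) - w) * ht q ≤ ∑ i ∈ T, (wd i : ℝ) * ht i := by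
          calc ((a : ℝ) - w) * ht q ≤ (∑ i ∈ T, (wd i : ℝ)) * ht q :=
                mul_le_mul_of_nonneg_right hra'.le (Nat.cast_nonneg _)
            _ = ∑ i ∈ T, (wd i : ℝ) * ht q := Finset.sum_mul _ _ _
            _ ≤ _ := Finset.sum_le_sum fun i hi =>
                mul_le_mul_of_nonneg_left (by exact_mod_cast hTh i hi q hq) (Nat.cast_nonneg _)
        rw [Nat.cast_sub hmb] at hSa
        have h3 : ((a : ℝ) - w) * ((b : ℝ) - H) ≤ ((a : ℝ) - w) * ((b : ℝ) - ht m) :=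
          mul_le_mul_of_nonneg_left (by linarith [hH m hm]) haw
        nlinarith

/-- Area guarantee of NFDH in a bin (Lemma 2.3): rectangles of width at most `w ≤ a` and
height at most `h ≤ b` can be packed into the bin `[0,a]×[0,b]` so that either all of them
are packed, or the packed area is at least `(a-w)·(b-h)`. -/
theorem nfdh_area_guarantee
    (a b : ℕ) (ha : 0 < a) (hb : 0 < b)
    (w h : ℝ) (hw : 0 < w) (hwa : w ≤ a) (hh : 0 < h) (hhb : h ≤ b)
    (ι : Type*) [Fintype ι] (wd ht : ι → ℕ)
    (hpos : ∀ i, 0 < wd i ∧ 0 < ht i)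
    (hsmall : ∀ i, (wd i : ℝ) ≤ w ∧ (ht i : ℝ) ≤ h) :
    ∃ (S : Finset ι) (x y : ι → ℕ),
      (∀ i ∈ S, x i + wd i ≤ a ∧ y i + ht i ≤ b) ∧
      (∀ i ∈ S, ∀ j ∈ S, i ≠ j →
        RectDisjoint (x i) (y i) (wd i) (ht i) (x j) (y j) (wd j) (ht j)) ∧
      (S = Finset.univ ∨ ((a : ℝ) - w) * ((b : ℝ) - h) ≤ ∑ i ∈ S, (wd i : ℝ) * ht i) := by
  
  obtain ⟨S, x, y, -, h1, h2, h3⟩ := nfdh_aux wd ht a w hwa (fun i => (hsmall i).1) _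
    Finset.univ le_rfl b h (fun i _ => (hsmall i).2)
  exact ⟨S, x, y, h1, h2, h3⟩
end

section
/- Let w, h be positive integers and let a finite family of rectangles be feasibly packed into the box [0,w]×[0,h] such that every rectangle touches the top or the bottom edge of the box (i.e., y_i = 0 or y_i + h_i = h). Suppose the heights of the rectangles take at most Γ distinct values and the heights of the rectangles touching the bottom edge take at most k distinct values. Call a rectangle unmovable if its boundary contains a corner of the box (there are at most four such rectangles), and movable otherwise. Then there exists a feasible packing of the same family into the same box in which every unmovable rectangle keeps its position, every rectangle keeps its y-coordinate, and the movable rectangles can be partitioned into at most 6^k·Γ groups such that each group consists of rectangles of one common height all touching the same edge (all touching the top, or all touching the bottom) and the x-intervals (x_i, x_i + w_i) of the rectangles in a group have pairwise disjoint interiors and union whose closure is a single interval (i.e., each group forms a contiguous rectangular sub-box of height equal to the common height). -/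
open scoped Classical

/-- A feasible packing of the family of rectangles `(w i, h i)` at positions `(x i, y i)`
inside `[0,W]×[0,H]`. -/
def IsPacking {ι : Type*} (w h x y : ι → ℕ) (W H : ℕ) : Prop :=
  (∀ i, x i + w i ≤ W ∧ y i + h i ≤ H) ∧
  Pairwise fun i j => RectDisjoint (x i) (y i) (w i) (h i) (x j) (y j) (w j) (h j)

/-- The boundary of the rectangle of width `wd i`, height `ht i` placed at `(x i, y i)`
contains a corner of the box `[0,w]×[0,h]` (such a rectangle is called unmovable). -/
def Unmovable {ι : Type*} (w h : ℕ) (wd ht x y : ι → ℕ) (i : ι) : Prop :=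
  (x i = 0 ∧ y i = 0) ∨ (x i + wd i = w ∧ y i = 0) ∨
  (x i = 0 ∧ y i + ht i = h) ∨ (x i + wd i = w ∧ y i + ht i = h)

def Packed {ι : Type*} (w ht : ι → ℕ) (b : ι → Bool) (h : ℕ) (S : Finset ι) (x : ι → ℕ) : Prop :=
  ∀ i ∈ S, ∀ j ∈ S, i ≠ j → (b i = b j ∨ h < ht i + ht j) →
    x i + w i ≤ x j ∨ x j + w j ≤ x i

def Grouped {ι : Type*} (w ht : ι → ℕ) (b : ι → Bool) (M : Finset ι) (x : ι → ℕ) (n : ℕ) : Prop :=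
  ∃ (c : ι → ℕ) (X : ℕ → ℕ),
    (∀ i ∈ M, c i < n) ∧
    (∀ i ∈ M, ∀ j ∈ M, c i = c j → ht i = ht j ∧ b i = b j) ∧
    (∀ i ∈ M, X (c i) ≤ x i ∧
      x i + w i ≤ X (c i) + ∑ j ∈ M.filter (fun j => c j = c i), w j)

def Contained {ι : Type*} (w : ι → ℕ) (S : Finset ι) (x : ι → ℕ) (l r : ℕ) : Finset ι :=
  S.filter (fun i => l ≤ x i ∧ x i + w i ≤ r)

def Sol {ι : Type*} (w ht : ι → ℕ) (b : ι → Bool) (h : ℕ) (S : Finset ι) (x : ι → ℕ)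
    (l r n : ℕ) : Prop :=
  ∃ x' : ι → ℕ, (∀ i ∈ S, i ∉ Contained w S x l r → x' i = x i) ∧
    (∀ i ∈ Contained w S x l r, l ≤ x' i ∧ x' i + w i ≤ r) ∧
    Packed w ht b h S x' ∧ Grouped w ht b (Contained w S x l r) x' n

theorem mem_contained {ι : Type*} {w : ι → ℕ} {S : Finset ι} {x : ι → ℕ} {l r : ℕ} {i : ι} :
    i ∈ Contained w S x l r ↔ i ∈ S ∧ l ≤ x i ∧ x i + w i ≤ r := by
  simp [Contained]

theorem Grouped.congr {ι : Type*} {w ht : ι → ℕ} {b : ι → Bool} {M : Finset ι} {x x' : ι → ℕ}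
    {n n' : ℕ} (hg : Grouped w ht b M x n) (hx : ∀ i ∈ M, x' i = x i) (hn : n ≤ n') :
    Grouped w ht b M x' n' := by
  obtain ⟨c, X, h1, h2, h3⟩ := hg
  refine ⟨c, X, fun i hi => (h1 i hi).trans_le hn, h2, fun i hi => ?_⟩
  rw [hx i hi]; exact h3 i hi

/-- Groups with colours in an arbitrary type. -/
theorem grouped_of {ι β : Type*} [DecidableEq β] {w ht : ι → ℕ} {b : ι → Bool} {M : Finset ι} {x : ι → ℕ}
    {n : ℕ} (c : ι → β) (X : β → ℕ) (hn : (M.image c).card ≤ n)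
    (h2 : ∀ i ∈ M, ∀ j ∈ M, c i = c j → ht i = ht j ∧ b i = b j)
    (h3 : ∀ i ∈ M, X (c i) ≤ x i ∧
      x i + w i ≤ X (c i) + ∑ j ∈ M.filter (fun j => c j = c i), w j) :
    Grouped w ht b M x n := by
  let e := (M.image c).equivFin
  let f : β → ℕ := fun v => if hv : v ∈ M.image c then (e ⟨v, hv⟩ : ℕ) else 0
  have hf : ∀ u ∈ M.image c, ∀ v ∈ M.image c, f u = f v → u = v := by
    intro u hu v hv huv
    simp only [f, hu, hv, dif_pos] at huv
    have := e.injective (Fin.ext huv)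
    simpa using this
  have hm : ∀ i ∈ M, c i ∈ M.image c := fun i hi => Finset.mem_image_of_mem c hi
  have hlt : ∀ v ∈ M.image c, f v < n := by
    intro v hv
    simp only [f, hv, dif_pos]
    exact (e ⟨v, hv⟩).2.trans_le hn
  have hX : ∃ Y : ℕ → ℕ, ∀ v ∈ M.image c, Y (f v) = X v := by
    refine ⟨fun m => if hm : ∃ v ∈ M.image c, f v = m then X hm.choose else 0, fun v hv => ?_⟩
    have hex : ∃ v' ∈ M.image c, f v' = f v := ⟨v, hv, rfl⟩
    simp only [hex, dif_pos]
    rw [hf _ hex.choose_spec.1 v hv hex.choose_spec.2]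
  obtain ⟨Y, hY⟩ := hX
  refine ⟨fun i => f (c i), Y, fun i hi => hlt _ (hm i hi),
    fun i hi j hj hij => h2 i hi j hj (hf _ (hm i hi) _ (hm j hj) hij), fun i hi => ?_⟩
  have hs : M.filter (fun j => f (c j) = f (c i)) = M.filter (fun j => c j = c i) := by
    apply Finset.filter_congr
    intro j hj
    exact ⟨fun hh => hf _ (hm j hj) _ (hm i hi) hh, fun hh => by rw [hh]⟩
  simp only [hs, hY _ (hm i hi)]
  exact h3 i hi

theorem grouped_union {ι : Type*} {w ht : ι → ℕ} {b : ι → Bool} {M₁ M₂ : Finset ι} {x : ι → ℕ}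
    {n₁ n₂ : ℕ} (hd : Disjoint M₁ M₂) (hg₁ : Grouped w ht b M₁ x n₁)
    (hg₂ : Grouped w ht b M₂ x n₂) : Grouped w ht b (M₁ ∪ M₂) x (n₁ + n₂) := by
  obtain ⟨c, X, h1, h2, h3⟩ := hg₁
  obtain ⟨d, Y, k1, k2, k3⟩ := hg₂
  have hd' : ∀ i ∈ M₂, i ∉ M₁ := fun i hi hi' => Finset.disjoint_left.1 hd hi' hi
  refine ⟨fun i => if i ∈ M₁ then c i else n₁ + d i,
    fun m => if m < n₁ then X m else Y (m - n₁), ?_, ?_, ?_⟩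
  · intro i hi
    by_cases hi1 : i ∈ M₁
    · have := h1 i hi1
      simp only [hi1, if_true]; omega
    · have hi2 : i ∈ M₂ := by simpa [hi1] using hi
      have := k1 i hi2
      simp only [hi1, if_false]; omega
  · intro i hi j hj hij
    by_cases hi1 : i ∈ M₁ <;> by_cases hj1 : j ∈ M₁ <;> simp only [hi1, hj1, if_true, if_false] at hij
    · exact h2 i hi1 j hj1 hij
    · have := h1 i hi1; omega
    · have := h1 j hj1; omega
    · exact k2 i (by simpa [hi1] using hi) j (by simpa [hj1] using hj) (by omega)
  · intro i hi
    by_cases hi1 : i ∈ M₁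
    · have hs : (M₁ ∪ M₂).filter (fun j => (if j ∈ M₁ then c j else n₁ + d j) = c i)
          = M₁.filter (fun j => c j = c i) := by
        ext j
        have := h1 i hi1
        by_cases hj1 : j ∈ M₁
        · simp [hj1]
        · simp [hj1]; omega
      simp only [hi1, if_true, hs, h1 i hi1]
      exact h3 i hi1
    · have hi2 : i ∈ M₂ := by simpa [hi1] using hi
      have hs : (M₁ ∪ M₂).filter (fun j => (if j ∈ M₁ then c j else n₁ + d j) = n₁ + d i)
          = M₂.filter (fun j => d j = d i) := by
        ext j
        by_cases hj1 : j ∈ M₁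
        · have := h1 j hj1
          have hj2 : j ∉ M₂ := fun hh => hd' j hh hj1
          simp [hj1, hj2]; omega
        · simp [hj1]
      simp only [hi1, if_false, hs]
      have := k3 i hi2
      simpa using this

theorem grouped_small {ι : Type*} {w ht : ι → ℕ} {b : ι → Bool} {M : Finset ι} {x : ι → ℕ}
    (hM : ∀ i ∈ M, ∀ j ∈ M, i = j) : Grouped w ht b M x 1 := by
  by_cases hne : M.Nonempty
  · obtain ⟨e, he⟩ := hne
    refine ⟨fun _ => 0, fun _ => x e, by simp, fun i hi j hj _ => ?_, fun i hi => ?_⟩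
    · rw [hM i hi j hj]; exact ⟨rfl, rfl⟩
    · have := hM i hi e he
      subst this
      refine ⟨le_rfl, ?_⟩
      have : w i ≤ ∑ j ∈ M, w j := Finset.single_le_sum (fun _ _ => Nat.zero_le _) hi
      simpa using this
  · rw [Finset.not_nonempty_iff_eq_empty] at hne
    subst hne
    exact ⟨fun _ => 0, fun _ => 0, by simp, by simp, by simp⟩

/-- Pairwise disjoint intervals inside `[p,q]` have total length at most `q - p`. -/
theorem width_sum {ι : Type*} {w x : ι → ℕ} {R : Finset ι} {p q : ℕ} (hne : R.Nonempty)
    (hd : ∀ i ∈ R, ∀ j ∈ R, i ≠ j → x i + w i ≤ x j ∨ x j + w j ≤ x i)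
    (hp : ∀ i ∈ R, p ≤ x i) (hq : ∀ i ∈ R, x i + w i ≤ q) :
    p + ∑ i ∈ R, w i ≤ q := by
  have h1 : (R.biUnion (fun i => Finset.Ico (x i) (x i + w i))).card = ∑ i ∈ R, w i := by
    rw [Finset.card_biUnion]
    · simp
    · intro i hi j hj hij
      change Disjoint (Finset.Ico (x i) (x i + w i)) (Finset.Ico (x j) (x j + w j))
      rw [Finset.disjoint_left]
      intro a ha hb
      simp only [Finset.mem_Ico] at ha hb
      rcases hd i hi j hj hij with h | h <;> omega
  have h2 : R.biUnion (fun i => Finset.Ico (x i) (x i + w i)) ⊆ Finset.Ico p q := by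
    intro a ha
    simp only [Finset.mem_biUnion, Finset.mem_Ico] at ha ⊢
    obtain ⟨i, hi, ha⟩ := ha
    have := hp i hi
    have := hq i hi
    omega
  have h3 := Finset.card_le_card h2
  rw [h1, Nat.card_Ico] at h3
  obtain ⟨i, hi⟩ := hne
  have := hp i hi
  have := hq i hi
  omega

/-- Sorting a row by a key. -/
theorem row_sort {ι : Type*} (w : ι → ℕ) (R : Finset ι) (κ : ι → ℤ) (p : ℕ) :
    ∃ pos : ι → ℕ,
      (∀ i ∈ R, p + ∑ j ∈ R.filter (fun j => κ j < κ i), w j ≤ pos i ∧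
        pos i + w i ≤ p + ∑ j ∈ R.filter (fun j => κ j ≤ κ i), w j) ∧
      ∀ i ∈ R, ∀ j ∈ R, i ≠ j → pos i + w i ≤ pos j ∨ pos j + w j ≤ pos i := by
  let f : ι → ℕ := fun v => if hv : v ∈ R then (R.equivFin ⟨v, hv⟩ : ℕ) else 0
  have hf : ∀ u ∈ R, ∀ v ∈ R, f u = f v → u = v := by
    intro u hu v hv huv
    simp only [f, hu, hv, dif_pos] at huv
    have := R.equivFin.injective (Fin.ext huv)
    simpa using this
  let lt : ι → ι → Prop := fun j i => κ j < κ i ∨ (κ j = κ i ∧ f j < f i)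
  have key : ∀ i ∈ R, ∀ j ∈ R, lt i j →
      ∑ k ∈ R.filter (fun k => lt k i), w k + w i ≤ ∑ k ∈ R.filter (fun k => lt k j), w k := by
    intro i hi j hj hij
    have hn : i ∉ R.filter (fun k => lt k i) := by simp [lt]
    rw [add_comm, ← Finset.sum_insert hn]
    apply Finset.sum_le_sum_of_subset
    intro k hk
    simp only [Finset.mem_insert, Finset.mem_filter, lt] at hk hij ⊢
    rcases hk with rfl | ⟨hk, hk'⟩
    · exact ⟨hi, hij⟩
    · exact ⟨hk, by omega⟩
  refine ⟨fun i => p + ∑ j ∈ R.filter (fun j => lt j i), w j, fun i hi => ⟨?_, ?_⟩, ?_⟩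
  · have : ∑ j ∈ R.filter (fun j => κ j < κ i), w j ≤ ∑ j ∈ R.filter (fun j => lt j i), w j := by
      apply Finset.sum_le_sum_of_subset
      intro k hk
      simp only [Finset.mem_filter, lt] at hk ⊢
      exact ⟨hk.1, Or.inl hk.2⟩
    simp only; omega
  · have : ∑ j ∈ R.filter (fun j => lt j i), w j + w i ≤
        ∑ j ∈ R.filter (fun j => κ j ≤ κ i), w j := by
      have hn : i ∉ R.filter (fun k => lt k i) := by simp [lt]
      rw [add_comm, ← Finset.sum_insert hn]
      apply Finset.sum_le_sum_of_subset
      intro k hk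
      simp only [Finset.mem_insert, Finset.mem_filter, lt] at hk ⊢
      rcases hk with rfl | ⟨hk, hk'⟩
      · exact ⟨hi, le_rfl⟩
      · exact ⟨hk, by omega⟩
    simp only; omega
  · intro i hi j hj hij
    have hfij : f i ≠ f j := fun hh => hij (hf i hi j hj hh)
    have : lt i j ∨ lt j i := by simp only [lt]; omega
    rcases this with hh | hh
    · left; have := key i hi j hj hh; simp only; omega
    · right; have := key j hj i hi hh; simp only; omega

/-- Gluing two zones. -/
theorem glue {ι : Type*} {w ht : ι → ℕ} {b : ι → Bool} {h : ℕ} {S : Finset ι} {x : ι → ℕ}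
    {l s r n₁ n₂ : ℕ} (hpos : ∀ i, 0 < w i) (hls : l ≤ s) (hsr : s ≤ r)

    (hs : ∀ i ∈ S, ∀ j ∈ S, x i < s → s < x i + w i → x j < s → s < x j + w j → i = j)
    (h1 : Sol w ht b h (S.filter (fun i => x i < s)) x l s n₁)
    (h2 : Sol w ht b h (S.filter (fun i => s < x i + w i)) x s r n₂) :
    Sol w ht b h S x l r (n₁ + n₂ + 1) := by
  obtain ⟨y, y1, y2, y3, y4⟩ := h1
  obtain ⟨z, z1, z2, z3, z4⟩ := h2
  have hm1 : ∀ i, i ∈ Contained w (S.filter (fun i => x i < s)) x l s ↔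
      i ∈ S ∧ l ≤ x i ∧ x i + w i ≤ s := by
    intro i; rw [mem_contained, Finset.mem_filter]
    have := hpos i
    constructor
    · rintro ⟨⟨a, b⟩, c⟩; exact ⟨a, c⟩
    · rintro ⟨a, b, c⟩; exact ⟨⟨a, by omega⟩, b, c⟩
  have hm2 : ∀ i, i ∈ Contained w (S.filter (fun i => s < x i + w i)) x s r ↔
      i ∈ S ∧ s ≤ x i ∧ x i + w i ≤ r := by
    intro i; rw [mem_contained, Finset.mem_filter]
    have := hpos i
    constructor
    · rintro ⟨⟨a, b⟩, c⟩; exact ⟨a, c⟩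
    · rintro ⟨a, b, c⟩; exact ⟨⟨a, by omega⟩, b, c⟩
  have hm : ∀ i, i ∈ Contained w S x l r ↔ i ∈ S ∧ l ≤ x i ∧ x i + w i ≤ r :=
    fun i => mem_contained
  let x' : ι → ℕ := fun i => if x i + w i ≤ s ∧ l ≤ x i then y i
    else if s ≤ x i ∧ x i + w i ≤ r then z i else x i
  have e1 : ∀ i ∈ S, x i < s → x' i = y i := by
    intro i hi his
    by_cases hc : x i + w i ≤ s ∧ l ≤ x i
    · simp only [x', hc, and_self, if_true]
    · have h' : ¬ (s ≤ x i ∧ x i + w i ≤ r) := by omega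
      simp only [x', hc, h', if_false]
      refine (y1 i (by simp [hi, his]) ?_).symm
      rw [hm1]; tauto
  have e2 : ∀ i ∈ S, s < x i + w i → x' i = z i := by
    intro i hi his
    have h' : ¬ (x i + w i ≤ s ∧ l ≤ x i) := by omega
    by_cases hc : s ≤ x i ∧ x i + w i ≤ r
    · simp only [x', h', hc, and_self, if_true, if_false]
    · simp only [x', hc, h', if_false]
      refine (z1 i (by simp [hi, his]) ?_).symm
      rw [hm2]; tauto
  -- left-contained items stay in the left zone
  have p1 : ∀ i ∈ S, x i + w i ≤ s → x' i + w i ≤ s := by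
    intro i hi his
    have := hpos i
    have hx : x i < s := by omega
    rw [e1 i hi hx]
    by_cases hc : l ≤ x i
    · exact (y2 i ((hm1 i).2 ⟨hi, hc, his⟩)).2
    · rw [y1 i (by simp [hi, hx]) (by rw [hm1]; tauto)]; exact his
  have p2 : ∀ i ∈ S, s ≤ x i → s ≤ x' i := by
    intro i hi his
    have := hpos i
    have hx : s < x i + w i := by omega
    rw [e2 i hi hx]
    by_cases hc : x i + w i ≤ r
    · exact (z2 i ((hm2 i).2 ⟨hi, his, hc⟩)).1
    · rw [z1 i (by simp [hi, hx]) (by rw [hm2]; tauto)]; exact his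
  refine ⟨x', ?_, ?_, ?_, ?_⟩
  · intro i hi hc
    rw [hm] at hc
    have a : ¬ (x i + w i ≤ s ∧ l ≤ x i) := fun hh => hc ⟨hi, by omega⟩
    have a' : ¬ (s ≤ x i ∧ x i + w i ≤ r) := fun hh => hc ⟨hi, by omega⟩
    simp only [x', a, a', if_false]
  · intro i hc
    rw [hm] at hc
    obtain ⟨hi, hl, hr⟩ := hc
    by_cases a : x i + w i ≤ s
    · have := y2 i ((hm1 i).2 ⟨hi, hl, a⟩)
      have := hpos i
      rw [e1 i hi (by omega)]; omega
    · by_cases a' : s ≤ x i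
      · have := z2 i ((hm2 i).2 ⟨hi, a', hr⟩)
        rw [e2 i hi (by omega)]; omega
      · have : x' i = x i := by
          simp only [x', a, a', false_and, if_false]
        omega
  · intro i hi j hj hij hc
    by_cases a : x i < s ∧ x j < s
    · rw [e1 i hi a.1, e1 j hj a.2]
      exact y3 i (by simp [hi, a]) j (by simp [hj, a]) hij hc
    · by_cases a' : s < x i + w i ∧ s < x j + w j
      · rw [e2 i hi a'.1, e2 j hj a'.2]
        exact z3 i (by simp [hi, a']) j (by simp [hj, a']) hij hc
      · have := hpos i
        have := hpos j
        by_cases q : x i < s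
        · left
          have := p1 i hi (by omega)
          have := p2 j hj (by omega)
          omega
        · right
          have := p1 j hj (by omega)
          have := p2 i hi (by omega)
          omega
  · set C1 := Contained w (S.filter (fun i => x i < s)) x l s
    set C2 := Contained w (S.filter (fun i => s < x i + w i)) x s r
    set C3 := S.filter (fun i => l ≤ x i ∧ x i + w i ≤ r ∧ x i < s ∧ s < x i + w i)
    have hC : Contained w S x l r = (C1 ∪ C2) ∪ C3 := by
      ext i
      have := hpos i
      rw [Finset.mem_union, Finset.mem_union, hm, hm1, hm2, Finset.mem_filter]
      constructor
      · rintro ⟨a, b, c⟩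
        by_cases q : x i + w i ≤ s
        · exact Or.inl (Or.inl ⟨a, b, q⟩)
        · by_cases q' : s ≤ x i
          · exact Or.inl (Or.inr ⟨a, q', c⟩)
          · exact Or.inr ⟨a, b, c, by omega, by omega⟩
      · rintro ((⟨a, b, c⟩ | ⟨a, b, c⟩) | ⟨a, b, c, _⟩)
        · exact ⟨a, by omega⟩
        · exact ⟨a, by omega⟩
        · exact ⟨a, by omega⟩
    rw [hC]
    apply grouped_union
    · rw [Finset.disjoint_left]
      intro i hi hi'
      rw [Finset.mem_union, hm1, hm2] at hi
      simp only [C3, Finset.mem_filter] at hi'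
      omega
    · apply grouped_union
      · rw [Finset.disjoint_left]
        intro i hi hi'
        rw [hm1] at hi
        rw [hm2] at hi'
        have := hpos i
        omega
      · refine y4.congr (fun i hi => ?_) le_rfl
        rw [hm1] at hi
        have := hpos i
        exact e1 i hi.1 (by omega)
      · refine z4.congr (fun i hi => ?_) le_rfl
        rw [hm2] at hi
        have := hpos i
        exact e2 i hi.1 (by omega)
    · apply grouped_small
      intro i hi j hj
      simp only [C3, Finset.mem_filter] at hi hj
      exact hs i hi.1 j hj.1 hi.2.2.2.1 hi.2.2.2.2 hj.2.2.2.1 hj.2.2.2.2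

/-- The right end of the item of edge `v` sticking out over the left border `s`. -/
theorem left_end {ι : Type*} {w ht : ι → ℕ} {b : ι → Bool} {h : ℕ} {S : Finset ι} {x : ι → ℕ}
    (hp : Packed w ht b h S x) (v : Bool) (s : ℕ) (hm : ∀ i ∈ S, s < x i + w i) :
    ∃ p, s ≤ p ∧ (∀ e ∈ S, b e = v → x e < s → x e + w e ≤ p) ∧
      (p = s ∨ ∃ e ∈ S, b e = v ∧ x e < s ∧ p = x e + w e) := by
  by_cases hex : ∃ e ∈ S, b e = v ∧ x e < s
  · obtain ⟨e, he, hv, hx⟩ := hex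
    refine ⟨x e + w e, (hm e he).le, ?_, Or.inr ⟨e, he, hv, hx, rfl⟩⟩
    intro e' he' hv' hx'
    by_cases q : e' = e
    · rw [q]
    · have := hm e he
      have := hm e' he'
      rcases hp e' he' e he q (Or.inl (by rw [hv, hv'])) with a | a <;> omega
  · exact ⟨s, le_rfl, fun e he hv hx => absurd ⟨e, he, hv, hx⟩ hex, Or.inl rfl⟩

theorem right_end {ι : Type*} {w ht : ι → ℕ} {b : ι → Bool} {h : ℕ} {S : Finset ι} {x : ι → ℕ}
    (hp : Packed w ht b h S x) (v : Bool) (u : ℕ) (hm : ∀ i ∈ S, x i < u) :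
    ∃ q, q ≤ u ∧ (∀ e ∈ S, b e = v → u < x e + w e → q ≤ x e) ∧
      (q = u ∨ ∃ e ∈ S, b e = v ∧ u < x e + w e ∧ q = x e) := by
  by_cases hex : ∃ e ∈ S, b e = v ∧ u < x e + w e
  · obtain ⟨e, he, hv, hx⟩ := hex
    refine ⟨x e, (hm e he).le, ?_, Or.inr ⟨e, he, hv, hx, rfl⟩⟩
    intro e' he' hv' hx'
    by_cases q : e' = e
    · rw [q]
    · have := hm e he
      have := hm e' he'
      rcases hp e' he' e he q (Or.inl (by rw [hv, hv'])) with a | a <;> omega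
  · exact ⟨u, le_rfl, fun e he hv hx => absurd ⟨e, he, hv, hx⟩ hex, Or.inl rfl⟩

/-- A zone with good borders can be sorted. -/
theorem middle {ι : Type*} {w ht : ι → ℕ} {b : ι → Bool} {h : ℕ} {S : Finset ι} {x : ι → ℕ}
    {s u : ℕ} (hpos : ∀ i, 0 < w i)
    (hp : Packed w ht b h S x) (hmeet : ∀ i ∈ S, x i < u ∧ s < x i + w i)
    (hL1 : ∀ e ∈ S, x e < s → b e = true → ∀ j ∈ S, b j = false → ht e + ht j ≤ h)
    (hL2 : ∀ e ∈ S, x e < s → b e = false → ∀ i ∈ S, ∀ j ∈ S, b i = true → b j = false →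
      h < ht i + ht j → h < ht i + ht e)
    (hR1 : ∀ e ∈ S, u < x e + w e → b e = false → ∀ i ∈ S, b i = true → ht i + ht e ≤ h)
    (hR2 : ∀ e ∈ S, u < x e + w e → b e = true → ∀ i ∈ S, ∀ j ∈ S, b i = true → b j = false →
      h < ht i + ht j → h < ht e + ht j) :
    Sol w ht b h S x s u (S.image (fun i => (ht i, b i))).card := by
  obtain ⟨pb, pb1, pb2, pb3⟩ := left_end hp true s (fun i hi => (hmeet i hi).2)
  obtain ⟨pt, pt1, pt2, pt3⟩ := left_end hp false s (fun i hi => (hmeet i hi).2)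
  obtain ⟨qb, qb1, qb2, qb3⟩ := right_end hp true u (fun i hi => (hmeet i hi).1)
  obtain ⟨qt, qt1, qt2, qt3⟩ := right_end hp false u (fun i hi => (hmeet i hi).1)
  set C := Contained w S x s u with hC
  have hCm : ∀ i, i ∈ C ↔ i ∈ S ∧ s ≤ x i ∧ x i + w i ≤ u := fun i => mem_contained
  -- contained items against conflicting items over the borders
  have left_of : ∀ i ∈ C, ∀ e ∈ S, x e < s → (b i = b e ∨ h < ht i + ht e) →
      x e + w e ≤ x i := by
    intro i hi e he hx hc
    rw [hCm] at hi
    have hne : i ≠ e := by rintro rfl; omega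
    have := hpos i
    rcases hp i hi.1 e he hne hc with a | a <;> omega
  have right_of : ∀ i ∈ C, ∀ e ∈ S, u < x e + w e → (b i = b e ∨ h < ht i + ht e) →
      x i + w i ≤ x e := by
    intro i hi e he hx hc
    rw [hCm] at hi
    have hne : i ≠ e := by rintro rfl; omega
    have := hpos i
    rcases hp i hi.1 e he hne hc with a | a <;> omega
  set RB := C.filter (fun i => b i = true) with hRB
  set RT := C.filter (fun i => b i = false) with hRT
  have mB : ∀ i, i ∈ RB ↔ i ∈ C ∧ b i = true := fun i => Finset.mem_filter
  have mT : ∀ i, i ∈ RT ↔ i ∈ C ∧ b i = false := fun i => Finset.mem_filter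
  have cS : ∀ i ∈ C, i ∈ S := fun i hi => ((hCm i).1 hi).1
  have pb_le : ∀ i ∈ RB, pb ≤ x i := by
    intro i hi
    obtain ⟨hi, hb⟩ := (mB i).1 hi
    rcases pb3 with rfl | ⟨e, he, hv, hx, rfl⟩
    · exact ((hCm i).1 hi).2.1
    · exact left_of i hi e he hx (Or.inl (by rw [hb, hv]))
  have pt_le : ∀ i ∈ RT, pt ≤ x i := by
    intro i hi
    obtain ⟨hi, hb⟩ := (mT i).1 hi
    rcases pt3 with rfl | ⟨e, he, hv, hx, rfl⟩
    · exact ((hCm i).1 hi).2.1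
    · exact left_of i hi e he hx (Or.inl (by rw [hb, hv]))
  have le_qb : ∀ i ∈ RB, x i + w i ≤ qb := by
    intro i hi
    obtain ⟨hi, hb⟩ := (mB i).1 hi
    rcases qb3 with rfl | ⟨e, he, hv, hx, rfl⟩
    · exact ((hCm i).1 hi).2.2
    · exact right_of i hi e he hx (Or.inl (by rw [hb, hv]))
  have le_qt : ∀ i ∈ RT, x i + w i ≤ qt := by
    intro i hi
    obtain ⟨hi, hb⟩ := (mT i).1 hi
    rcases qt3 with rfl | ⟨e, he, hv, hx, rfl⟩
    · exact ((hCm i).1 hi).2.2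
    · exact right_of i hi e he hx (Or.inl (by rw [hb, hv]))
  -- positions
  obtain ⟨posB, posB1, posB2⟩ := row_sort w RB (fun i => (ht i : ℤ)) (qb - ∑ i ∈ RB, w i)
  obtain ⟨posT, posT1, posT2⟩ := row_sort w RT (fun i => -(ht i : ℤ)) pt
  have sumB : ∀ i ∈ RB, pb + ∑ i ∈ RB, w i ≤ qb := by
    intro i hi
    refine width_sum (x := x) ⟨i, hi⟩ ?_ pb_le le_qb
    intro i hi j hj hij
    rw [mB] at hi hj
    exact hp i (cS i hi.1) j (cS j hj.1) hij (Or.inl (by rw [hi.2, hj.2]))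
  have sumT : ∀ i ∈ RT, pt + ∑ i ∈ RT, w i ≤ qt := by
    intro i hi
    refine width_sum (x := x) ⟨i, hi⟩ ?_ pt_le le_qt
    intro i hi j hj hij
    rw [mT] at hi hj
    exact hp i (cS i hi.1) j (cS j hj.1) hij (Or.inl (by rw [hi.2, hj.2]))
  have B1 : ∀ i ∈ RB, qb ≤ posB i + ∑ j ∈ RB.filter (fun j => ht i ≤ ht j), w j := by
    intro i hi
    have h1 := (posB1 i hi).1
    have h2 := sumB i hi
    have h3 := Finset.sum_filter_add_sum_filter_not RB (fun j => (ht j : ℤ) < (ht i : ℤ)) w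
    have h4 : RB.filter (fun j => ¬ (ht j : ℤ) < (ht i : ℤ)) = RB.filter (fun j => ht i ≤ ht j) := by
      apply Finset.filter_congr; intro j _; omega
    rw [h4] at h3
    omega
  have B2 : ∀ i ∈ RB, pb ≤ posB i ∧ posB i + w i ≤ qb := by
    intro i hi
    have h1 := posB1 i hi
    have h2 := sumB i hi
    have h3 : ∑ j ∈ RB.filter (fun j => (ht j : ℤ) ≤ (ht i : ℤ)), w j ≤ ∑ j ∈ RB, w j :=
      Finset.sum_le_sum_of_subset (Finset.filter_subset _ _)
    omega
  have T1 : ∀ i ∈ RT, posT i + w i ≤ pt + ∑ j ∈ RT.filter (fun j => ht i ≤ ht j), w j := by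
    intro i hi
    have h1 := (posT1 i hi).2
    have h4 : RT.filter (fun j => -(ht j : ℤ) ≤ -(ht i : ℤ)) = RT.filter (fun j => ht i ≤ ht j) := by
      apply Finset.filter_congr; intro j _; omega
    rw [h4] at h1
    exact h1
  have T2 : ∀ i ∈ RT, pt ≤ posT i ∧ posT i + w i ≤ qt := by
    intro i hi
    have h1 := posT1 i hi
    have h2 := sumT i hi
    have h3 : ∑ j ∈ RT.filter (fun j => -(ht j : ℤ) ≤ -(ht i : ℤ)), w j ≤ ∑ j ∈ RT, w j :=
      Finset.sum_le_sum_of_subset (Finset.filter_subset _ _)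
    omega
  -- conflicting bottom and top items
  have BT : ∀ i ∈ RB, ∀ j ∈ RT, h < ht i + ht j → posT j + w j ≤ posB i := by
    intro i hi j hj hc
    have h1 := B1 i hi
    have h2 := T1 j hj
    have hiC := (mB i).1 hi
    have hjC := (mT j).1 hj
    set U1 := RT.filter (fun k => ht j ≤ ht k)
    set U2 := RB.filter (fun k => ht i ≤ ht k)
    have m1 : ∀ k, k ∈ U1 ↔ k ∈ RT ∧ ht j ≤ ht k := fun k => Finset.mem_filter
    have m2 : ∀ k, k ∈ U2 ↔ k ∈ RB ∧ ht i ≤ ht k := fun k => Finset.mem_filter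
    have hd : Disjoint U1 U2 := by
      rw [Finset.disjoint_left]
      intro k hk hk'
      have a := ((mT k).1 ((m1 k).1 hk).1).2
      have a' := ((mB k).1 ((m2 k).1 hk').1).2
      rw [a] at a'; cases a'
    have h3 : pt + ∑ k ∈ U1 ∪ U2, w k ≤ qb := by
      refine width_sum (x := x) ⟨i, ?_⟩ ?_ ?_ ?_
      · rw [Finset.mem_union, m2]; exact Or.inr ⟨hi, le_rfl⟩
      · intro k hk k' hk' hne
        rw [Finset.mem_union, m1, m2, mT, mB] at hk hk'
        have kS : k ∈ S := by rcases hk with hk | hk <;> exact cS k hk.1.1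
        have kS' : k' ∈ S := by rcases hk' with hk | hk <;> exact cS k' hk.1.1
        refine hp k kS k' kS' hne ?_
        rcases hk with ⟨⟨_, a⟩, q⟩ | ⟨⟨_, a⟩, q⟩ <;> rcases hk' with ⟨⟨_, a'⟩, q'⟩ | ⟨⟨_, a'⟩, q'⟩
        · left; rw [a, a']
        · right; omega
        · right; omega
        · left; rw [a, a']
      · intro k hk
        rw [Finset.mem_union, m1, m2] at hk
        rcases hk with ⟨hk, q⟩ | ⟨hk, q⟩
        · exact pt_le k hk
        · have hkC := (mB k).1 hk
          rcases pt3 with rfl | ⟨e, he, hv, hx, rfl⟩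
          · exact ((hCm k).1 hkC.1).2.1
          · refine left_of k hkC.1 e he hx (Or.inr ?_)
            have := hL2 e he hx hv i (cS i hiC.1) j (cS j hjC.1) hiC.2 hjC.2 hc
            omega
      · intro k hk
        rw [Finset.mem_union, m1, m2] at hk
        rcases hk with ⟨hk, q⟩ | ⟨hk, q⟩
        · have hkC := (mT k).1 hk
          rcases qb3 with rfl | ⟨e, he, hv, hx, rfl⟩
          · exact ((hCm k).1 hkC.1).2.2
          · refine right_of k hkC.1 e he hx (Or.inr ?_)
            have := hR2 e he hx hv i (cS i hiC.1) j (cS j hjC.1) hiC.2 hjC.2 hc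
            omega
        · exact le_qb k hk
    rw [Finset.sum_union hd] at h3
    omega
  -- bottom item against top item over the left border
  have BL : ∀ i ∈ RB, ∀ e ∈ S, x e < s → h < ht i + ht e → x e + w e ≤ posB i := by
    intro i hi e he hx hc
    have h1 := B1 i hi
    set U2 := RB.filter (fun k => ht i ≤ ht k)
    have m2 : ∀ k, k ∈ U2 ↔ k ∈ RB ∧ ht i ≤ ht k := fun k => Finset.mem_filter
    have h3 : x e + w e + ∑ k ∈ U2, w k ≤ qb := by
      refine width_sum (x := x) ⟨i, (m2 i).2 ⟨hi, le_rfl⟩⟩ ?_ ?_ ?_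
      · intro k hk k' hk' hne
        rw [m2, mB] at hk hk'
        exact hp k (cS k hk.1.1) k' (cS k' hk'.1.1) hne (Or.inl (by rw [hk.1.2, hk'.1.2]))
      · intro k hk
        rw [m2, mB] at hk
        exact left_of k hk.1.1 e he hx (Or.inr (by omega))
      · intro k hk
        exact le_qb k ((m2 k).1 hk).1
    omega
  have TR : ∀ j ∈ RT, ∀ e ∈ S, u < x e + w e → h < ht j + ht e → posT j + w j ≤ x e := by
    intro i hi e he hx hc
    have h1 := T1 i hi
    set U2 := RT.filter (fun k => ht i ≤ ht k)
    have m2 : ∀ k, k ∈ U2 ↔ k ∈ RT ∧ ht i ≤ ht k := fun k => Finset.mem_filter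
    have h3 : pt + ∑ k ∈ U2, w k ≤ x e := by
      refine width_sum (x := x) ⟨i, (m2 i).2 ⟨hi, le_rfl⟩⟩ ?_ ?_ ?_
      · intro k hk k' hk' hne
        rw [m2, mT] at hk hk'
        exact hp k (cS k hk.1.1) k' (cS k' hk'.1.1) hne (Or.inl (by rw [hk.1.2, hk'.1.2]))
      · intro k hk
        exact pt_le k ((m2 k).1 hk).1
      · intro k hk
        rw [m2, mT] at hk
        exact right_of k hk.1.1 e he hx (Or.inr (by omega))
    omega
  let x' : ι → ℕ := fun i => if i ∈ C then (if b i = true then posB i else posT i) else x i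
  have xB : ∀ i ∈ RB, x' i = posB i := by
    intro i hi
    have := (mB i).1 hi
    simp [x', this.1, this.2]
  have xT : ∀ i ∈ RT, x' i = posT i := by
    intro i hi
    have := (mT i).1 hi
    simp [x', this.1, this.2]
  have xN : ∀ i, i ∉ C → x' i = x i := by
    intro i hi
    simp [x', hi]
  have cases_C : ∀ i ∈ C, i ∈ RB ∨ i ∈ RT := by
    intro i hi
    rw [mB, mT]
    cases hb : b i <;> simp [hi]
  have out : ∀ j ∈ S, j ∉ C → x j < s ∨ u < x j + w j := by
    intro j hj hjC
    by_contra hcon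
    exact hjC ((hCm j).2 ⟨hj, by omega, by omega⟩)
  -- contained item against border item
  have mixed : ∀ i ∈ C, ∀ j ∈ S, j ∉ C → (b i = b j ∨ h < ht i + ht j) →
      x' i + w i ≤ x' j ∨ x' j + w j ≤ x' i := by
    intro i hi j hj hjC hc
    rw [xN j hjC]
    rcases cases_C i hi with hiR | hiR
    · rw [xB i hiR]
      have hbi := ((mB i).1 hiR).2
      have b2 := B2 i hiR
      cases hbj : b j
      · have hc' : h < ht i + ht j := by
          rcases hc with hc | hc
          · rw [hbi, hbj] at hc; cases hc
          · exact hc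
        rcases out j hj hjC with o | o
        · right; exact BL i hiR j hj o hc'
        · have := hR1 j hj o hbj i (cS i hi) hbi
          omega
      · rcases out j hj hjC with o | o
        · right; have := pb2 j hj hbj o; omega
        · left; have := qb2 j hj hbj o; omega
    · rw [xT i hiR]
      have hbi := ((mT i).1 hiR).2
      have b2 := T2 i hiR
      cases hbj : b j
      · rcases out j hj hjC with o | o
        · right; have := pt2 j hj hbj o; omega
        · left; have := qt2 j hj hbj o; omega
      · have hc' : h < ht i + ht j := by
          rcases hc with hc | hc
          · rw [hbi, hbj] at hc; cases hc
          · exact hc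
        rcases out j hj hjC with o | o
        · have := hL1 j hj o hbj i (cS i hi) hbi
          omega
        · left; exact TR i hiR j hj o hc'
  refine ⟨x', fun i _ hi => xN i hi, ?_, ?_, ?_⟩
  · intro i hi
    rcases cases_C i hi with hiR | hiR
    · rw [xB i hiR]; have := B2 i hiR; omega
    · rw [xT i hiR]; have := T2 i hiR; omega
  · intro i hi j hj hij hc
    by_cases hiC : i ∈ C
    · by_cases hjC : j ∈ C
      · rcases cases_C i hiC with hiR | hiR <;> rcases cases_C j hjC with hjR | hjR
        · rw [xB i hiR, xB j hjR]; exact posB2 i hiR j hjR hij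
        · rw [xB i hiR, xT j hjR]
          right
          refine BT i hiR j hjR ?_
          rcases hc with hc | hc
          · rw [((mB i).1 hiR).2, ((mT j).1 hjR).2] at hc; cases hc
          · exact hc
        · rw [xT i hiR, xB j hjR]
          left
          refine BT j hjR i hiR ?_
          rcases hc with hc | hc
          · rw [((mB j).1 hjR).2, ((mT i).1 hiR).2] at hc; cases hc
          · omega
        · rw [xT i hiR, xT j hjR]; exact posT2 i hiR j hjR hij
      · exact mixed i hiC j hj hjC hc
    · by_cases hjC : j ∈ C
      · refine (mixed j hjC i hi hiC ?_).symm
        rcases hc with hc | hc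
        · exact Or.inl hc.symm
        · exact Or.inr (by omega)
      · rw [xN i hiC, xN j hjC]; exact hp i hi j hj hij hc
  · rw [← hC]
    refine grouped_of (fun i => (ht i, b i))
      (fun v => if v.2 = true then
          (qb - ∑ i ∈ RB, w i) + ∑ j ∈ RB.filter (fun j => (ht j : ℤ) < (v.1 : ℤ)), w j
        else pt + ∑ j ∈ RT.filter (fun j => -(ht j : ℤ) < -(v.1 : ℤ)), w j) ?_ ?_ ?_
    · exact Finset.card_le_card (Finset.image_subset_image (fun i hi => cS i hi))
    · intro i _ j _ hij
      simpa using hij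
    · intro i hi
      rcases cases_C i hi with hiR | hiR
      · have hbi := ((mB i).1 hiR).2
        rw [xB i hiR]
        have h1 := posB1 i hiR
        have hs : RB.filter (fun j => (ht j : ℤ) ≤ (ht i : ℤ)) =
            RB.filter (fun j => (ht j : ℤ) < (ht i : ℤ)) ∪
              C.filter (fun j => (ht j, b j) = (ht i, b i)) := by
          ext j
          simp only [Finset.mem_union, Finset.mem_filter, mB, hbi, Prod.mk.injEq]
          constructor
          · rintro ⟨⟨a, a'⟩, q⟩
            by_cases q' : ht j = ht i
            · exact Or.inr ⟨a, q', a'⟩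
            · exact Or.inl ⟨⟨a, a'⟩, by omega⟩
          · rintro (⟨⟨a, a'⟩, q⟩ | ⟨a, a', q⟩)
            · exact ⟨⟨a, a'⟩, by omega⟩
            · exact ⟨⟨a, q⟩, by omega⟩
        have hd : Disjoint (RB.filter (fun j => (ht j : ℤ) < (ht i : ℤ)))
              (C.filter (fun j => (ht j, b j) = (ht i, b i))) := by
          rw [Finset.disjoint_left]
          intro j hj hj'
          simp only [Finset.mem_filter, Prod.mk.injEq] at hj hj'
          omega
        rw [hs, Finset.sum_union hd] at h1
        simp only [hbi, if_true] at h1 ⊢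
        omega
      · have hbi := ((mT i).1 hiR).2
        rw [xT i hiR]
        have h1 := posT1 i hiR
        have hs : RT.filter (fun j => -(ht j : ℤ) ≤ -(ht i : ℤ)) =
            RT.filter (fun j => -(ht j : ℤ) < -(ht i : ℤ)) ∪
              C.filter (fun j => (ht j, b j) = (ht i, b i)) := by
          ext j
          simp only [Finset.mem_union, Finset.mem_filter, mT, hbi, Prod.mk.injEq]
          constructor
          · rintro ⟨⟨a, a'⟩, q⟩
            by_cases q' : ht j = ht i
            · exact Or.inr ⟨a, q', a'⟩
            · exact Or.inl ⟨⟨a, a'⟩, by omega⟩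
          · rintro (⟨⟨a, a'⟩, q⟩ | ⟨a, a', q⟩)
            · exact ⟨⟨a, a'⟩, by omega⟩
            · exact ⟨⟨a, q⟩, by omega⟩
        have hd : Disjoint (RT.filter (fun j => -(ht j : ℤ) < -(ht i : ℤ)))
              (C.filter (fun j => (ht j, b j) = (ht i, b i))) := by
          rw [Finset.disjoint_left]
          intro j hj hj'
          simp only [Finset.mem_filter, Prod.mk.injEq] at hj hj'
          omega
        rw [hs, Finset.sum_union hd] at h1
        simp only [hbi, if_false, Bool.false_eq_true] at h1 ⊢
        omega

theorem bool_aux (p q r : Bool) (h1 : p ≠ r) (h2 : q ≠ r) : p = q := by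
  cases p <;> cases q <;> cases r <;> simp_all

theorem Sol.trivial {ι : Type*} {w ht : ι → ℕ} {b : ι → Bool} {h : ℕ} {S : Finset ι} {x : ι → ℕ}
    (hpos : ∀ i, 0 < w i) (hp : Packed w ht b h S x) (l n : ℕ) : Sol w ht b h S x l l n := by
  have hc : ∀ i, i ∉ Contained w S x l l := by
    intro i hi
    have := mem_contained.1 hi
    have := hpos i
    omega
  exact ⟨x, fun _ _ _ => rfl, fun i hi => absurd hi (hc i), hp,
    fun _ => 0, fun _ => 0, fun i hi => absurd hi (hc i), fun i hi => absurd hi (hc i),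
    fun i hi => absurd hi (hc i)⟩

theorem Sol.mono {ι : Type*} {w ht : ι → ℕ} {b : ι → Bool} {h : ℕ} {S : Finset ι} {x : ι → ℕ}
    {l r n n' : ℕ} (hs : Sol w ht b h S x l r n) (hn : n ≤ n') : Sol w ht b h S x l r n' := by
  obtain ⟨x', h1, h2, h3, h4⟩ := hs
  exact ⟨x', h1, h2, h3, h4.congr (fun _ _ => rfl) hn⟩

theorem cut_left {ι : Type*} {w ht : ι → ℕ} {b : ι → Bool} {h : ℕ} {S : Finset ι} {x : ι → ℕ}
    {l r : ℕ} (hlr : l ≤ r)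
    (hp : Packed w ht b h S x) (hmeet : ∀ i ∈ S, x i < r ∧ l < x i + w i)
    (hl : ∀ i ∈ S, ∀ j ∈ S, x i < l → x j < l → i = j)
    (P G : ι → Prop)
    (hPG : ∀ i ∈ S, ∀ j ∈ S, P i → G j → i ≠ j ∧ (b i = b j ∨ h < ht i + ht j))
    (hex : ∃ i ∈ S, P i) :
    ∃ s, l ≤ s ∧ s ≤ r ∧ (∀ i ∈ S, x i < s → l < s → ¬ P i) ∧
      (∀ i ∈ S, ∀ j ∈ S, x i < s → s < x i + w i → x j < s → s < x j + w j → i = j) ∧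
      (∀ e ∈ S, x e < s → s < x e + w e → ¬ G e) := by
  let Inv : ℕ → Prop := fun s => (∀ i ∈ S, x i < s → l < s → ¬ P i) ∧
      (∀ i ∈ S, ∀ j ∈ S, x i < s → s < x i + w i → x j < s → s < x j + w j → i = j)
  have hne : ((Finset.Icc l r).filter Inv).Nonempty := by
    refine ⟨l, ?_⟩
    simp only [Finset.mem_filter, Finset.mem_Icc, le_refl, hlr, true_and, Inv]
    exact ⟨fun i _ _ hh => absurd hh (lt_irrefl _), fun i hi j hj a _ a' _ => hl i hi j hj a a'⟩
  obtain ⟨s, hs, hmax⟩ := Finset.exists_max_image _ id hne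
  simp only [Finset.mem_filter, Finset.mem_Icc, id] at hs hmax
  obtain ⟨⟨hls, hsr⟩, hP, hC⟩ := hs
  refine ⟨s, hls, hsr, hP, hC, ?_⟩
  intro e he hxe hse hGe
  -- a forbidden item left of the right end of `e`
  have hno : ∀ i ∈ S, x i < x e + w e → ¬ P i := by
    intro i hi hxi hPi
    obtain ⟨hne, hc⟩ := hPG i hi e he hPi hGe
    have hm := hmeet i hi
    rcases hp i hi e he hne hc with a | a
    · by_cases q : l < s
      · exact hP i hi (by omega) q hPi
      · exact hne (hl i hi e he (by omega) (by omega))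
    · omega
  by_cases hr : r ≤ x e + w e
  · obtain ⟨i, hi, hPi⟩ := hex
    have := hmeet i hi
    exact hno i hi (by omega) hPi
  · have := hmax (x e + w e) ⟨⟨by omega, by omega⟩, fun i hi hx _ => hno i hi hx, ?_⟩
    · omega
    · have ht' : ∀ i ∈ S, x i < x e + w e → x e + w e < x i + w i → b i ≠ b e := by
        intro i hi a a' hb
        have hne : i ≠ e := by rintro rfl; omega
        rcases hp i hi e he hne (Or.inl hb) with q | q <;> omega
      intro i hi j hj a1 a2 a3 a4
      by_contra hij
      have q1 := ht' i hi a1 a2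
      have q2 := ht' j hj a3 a4
      have q3 : b i = b j := bool_aux _ _ _ q1 q2
      rcases hp i hi j hj hij (Or.inl q3) with q | q <;> omega

theorem cut_right {ι : Type*} {w ht : ι → ℕ} {b : ι → Bool} {h : ℕ} {S : Finset ι} {x : ι → ℕ}
    {l r : ℕ} (hlr : l ≤ r)
    (hp : Packed w ht b h S x) (hmeet : ∀ i ∈ S, x i < r ∧ l < x i + w i)
    (hl : ∀ i ∈ S, ∀ j ∈ S, x i < l → x j < l → i = j)
    (hr : ∀ i ∈ S, ∀ j ∈ S, r < x i + w i → r < x j + w j → i = j)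
    (P G : ι → Prop)
    (hPG : ∀ i ∈ S, ∀ j ∈ S, P i → G j → i ≠ j ∧ (b i = b j ∨ h < ht i + ht j)) :
    ∃ u, l ≤ u ∧ u ≤ r ∧ (∀ i ∈ S, u < x i + w i → u < r → ¬ P i) ∧
      (∀ i ∈ S, ∀ j ∈ S, x i < u → u < x i + w i → x j < u → u < x j + w j → i = j) ∧
      (u = l ∨ ∀ e ∈ S, x e < u → u < x e + w e → ¬ G e) := by
  let Inv : ℕ → Prop := fun u => (∀ i ∈ S, u < x i + w i → u < r → ¬ P i) ∧
      (∀ i ∈ S, ∀ j ∈ S, x i < u → u < x i + w i → x j < u → u < x j + w j → i = j)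
  have hne : ((Finset.Icc l r).filter Inv).Nonempty := by
    refine ⟨r, ?_⟩
    simp only [Finset.mem_filter, Finset.mem_Icc, le_refl, hlr, true_and, Inv]
    exact ⟨fun i _ _ hh => absurd hh (lt_irrefl _), fun i hi j hj _ a _ a' => hr i hi j hj a a'⟩
  obtain ⟨u, hu, hmin⟩ := Finset.exists_min_image _ id hne
  simp only [Finset.mem_filter, Finset.mem_Icc, id] at hu hmin
  obtain ⟨⟨hlu, hur⟩, hP, hC⟩ := hu
  refine ⟨u, hlu, hur, hP, hC, ?_⟩
  by_cases hul : u = l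
  · exact Or.inl hul
  right
  intro e he hxe hue hGe
  have hno : ∀ i ∈ S, x e < x i + w i → ¬ P i := by
    intro i hi hxi hPi
    obtain ⟨hne, hc⟩ := hPG i hi e he hPi hGe
    have hm := hmeet i hi
    rcases hp i hi e he hne hc with a | a
    · omega
    · by_cases q : u < r
      · exact hP i hi (by omega) q hPi
      · omega
  by_cases hxl : x e ≤ l
  · have := hmin l ⟨⟨by omega, by omega⟩, fun i hi hx _ => hno i hi (by omega),
      fun i hi j hj a _ a' _ => hl i hi j hj a a'⟩
    omega
  · have := hmin (x e) ⟨⟨by omega, by omega⟩, fun i hi hx _ => hno i hi hx, ?_⟩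
    · omega
    · have ht' : ∀ i ∈ S, x i < x e → x e < x i + w i → b i ≠ b e := by
        intro i hi a a' hb
        have hne : i ≠ e := by rintro rfl; omega
        rcases hp i hi e he hne (Or.inl hb) with q | q <;> omega
      intro i hi j hj a1 a2 a3 a4
      by_contra hij
      have q1 := ht' i hi a1 a2
      have q2 := ht' j hj a3 a4
      have q3 : b i = b j := bool_aux _ _ _ q1 q2
      rcases hp i hi j hj hij (Or.inl q3) with q | q <;> omega

/-- Heights of bottom items that conflict with some top item. -/
def Active {ι : Type*} (ht : ι → ℕ) (b : ι → Bool) (h : ℕ) (S : Finset ι) : Finset ℕ :=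
  (S.filter (fun i => b i = true ∧ ∃ j ∈ S, b j = false ∧ h < ht i + ht j)).image ht

theorem mem_active {ι : Type*} {ht : ι → ℕ} {b : ι → Bool} {h : ℕ} {S : Finset ι} {a : ℕ} :
    a ∈ Active ht b h S ↔
      ∃ i ∈ S, b i = true ∧ (∃ j ∈ S, b j = false ∧ h < ht i + ht j) ∧ ht i = a := by
  simp [Active, and_assoc]

theorem Packed.sub {ι : Type*} {w ht : ι → ℕ} {b : ι → Bool} {h : ℕ} {S S' : Finset ι}
    {x : ι → ℕ} (hp : Packed w ht b h S x) (hs : S' ⊆ S) : Packed w ht b h S' x :=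
  fun i hi j hj => hp i (hs hi) j (hs hj)

theorem types_lt {ι : Type*} {ht : ι → ℕ} {b : ι → Bool} {S S' : Finset ι} (hs : S' ⊆ S)
    (i₀ : ι) (hi₀ : i₀ ∈ S) (hno : ∀ i ∈ S', ht i = ht i₀ → b i = b i₀ → False) :
    (S'.image (fun i => (ht i, b i))).card + 1 ≤ (S.image (fun i => (ht i, b i))).card := by
  have hm : (ht i₀, b i₀) ∈ S.image (fun i => (ht i, b i)) :=
    Finset.mem_image_of_mem (fun i => (ht i, b i)) hi₀
  have hsub : S'.image (fun i => (ht i, b i)) ⊆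
      (S.image (fun i => (ht i, b i))).erase (ht i₀, b i₀) := by
    intro v hv
    obtain ⟨i, hi, rfl⟩ := Finset.mem_image.1 hv
    rw [Finset.mem_erase]
    refine ⟨fun heq => ?_, Finset.mem_image_of_mem (fun i => (ht i, b i)) (hs hi)⟩
    simp only [Prod.mk.injEq] at heq
    exact hno i hi heq.1 heq.2
  have h1 := Finset.card_le_card hsub
  rw [Finset.card_erase_of_mem hm] at h1
  have := Finset.card_pos.2 ⟨_, hm⟩
  omega

theorem active_lt {ι : Type*} {ht : ι → ℕ} {b : ι → Bool} {h : ℕ} {S S' : Finset ι} (hs : S' ⊆ S)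
    {a m : ℕ} (ha : a ∈ Active ht b h S) (hm : (Active ht b h S).card ≤ m + 1)
    (hno : ∀ i ∈ S', ∀ j ∈ S', b i = true → b j = false → h < ht i + ht j → ht i ≠ a) :
    (Active ht b h S').card ≤ m := by
  have hsub : Active ht b h S' ⊆ (Active ht b h S).erase a := by
    intro v hv
    obtain ⟨i, hi, hb, ⟨j, hj, hbj, hc⟩, rfl⟩ := mem_active.1 hv
    rw [Finset.mem_erase]
    exact ⟨hno i hi j hj hb hbj hc, mem_active.2 ⟨i, hs hi, hb, ⟨j, hs hj, hbj, hc⟩, rfl⟩⟩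
  have h1 := Finset.card_le_card hsub
  rw [Finset.card_erase_of_mem ha] at h1
  omega

theorem zone {ι : Type*} {w ht : ι → ℕ} {b : ι → Bool} {h : ℕ} {x : ι → ℕ}
    (hpos : ∀ i, 0 < w i) (m : ℕ) : ∀ (S : Finset ι) (l r : ℕ), l ≤ r →
    Packed w ht b h S x → (∀ i ∈ S, x i < r ∧ l < x i + w i) →
    (∀ i ∈ S, ∀ j ∈ S, x i < l → x j < l → i = j) →
    (∀ i ∈ S, ∀ j ∈ S, r < x i + w i → r < x j + w j → i = j) →
    (Active ht b h S).card ≤ m →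
    Sol w ht b h S x l r ((2 ^ (m + 1) - 1) * (S.image (fun i => (ht i, b i))).card) := by
  have base : ∀ (S : Finset ι) (l r : ℕ), Packed w ht b h S x →
      (∀ i ∈ S, x i < r ∧ l < x i + w i) → Active ht b h S = ∅ →
      Sol w ht b h S x l r (S.image (fun i => (ht i, b i))).card := by
    intro S l r hp hmeet hA
    have hno : ∀ i ∈ S, ∀ j ∈ S, b i = true → b j = false → ht i + ht j ≤ h := by
      intro i hi j hj hbi hbj
      by_contra hcon
      have : ht i ∈ Active ht b h S :=
        mem_active.2 ⟨i, hi, hbi, ⟨j, hj, hbj, by omega⟩, rfl⟩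
      rw [hA] at this
      simp at this
    refine middle hpos hp hmeet ?_ ?_ ?_ ?_
    · intro e he _ hb j hj hbj; exact hno e he j hj hb hbj
    · intro e _ _ _ i hi j hj hbi hbj hc
      have := hno i hi j hj hbi hbj; omega
    · intro e he _ hb j hj hbj; exact hno j hj e he hbj hb
    · intro e _ _ _ i hi j hj hbi hbj hc
      have := hno i hi j hj hbi hbj; omega
  induction m with
  | zero =>
    intro S l r _ hp hmeet _ _ hA
    refine (base S l r hp hmeet (Finset.card_eq_zero.1 (by omega))).mono ?_
    simp
  | succ m ih =>
    intro S l r hlr hp hmeet hl hr hA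
    have hD : 2 ^ (m + 1 + 1) - 1 = 2 * (2 ^ (m + 1) - 1) + 1 := by
      have : 0 < 2 ^ (m + 1) := by positivity
      rw [pow_succ 2 (m + 1)]; omega
    have hD1 : 1 ≤ 2 ^ (m + 1) - 1 := by
      have : 0 < 2 ^ m := by positivity
      rw [pow_succ]; omega
    rw [hD]
    generalize hDD : 2 ^ (m + 1) - 1 = D at ih hD1
    by_cases hAe : Active ht b h S = ∅
    · refine (base S l r hp hmeet hAe).mono ?_
      exact Nat.le_mul_of_pos_left _ (by omega)
    have hAne : (Active ht b h S).Nonempty := Finset.nonempty_iff_ne_empty.2 hAe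
    obtain ⟨a1, ha1, hmin⟩ := Finset.exists_min_image _ id hAne
    obtain ⟨ak, hak, hmax⟩ := Finset.exists_max_image _ id hAne
    simp only [id] at hmin hmax
    have hact : ∀ i ∈ S, ∀ j ∈ S, b i = true → b j = false → h < ht i + ht j →
        a1 ≤ ht i ∧ ht i ≤ ak := by
      intro i hi j hj hbi hbj hc
      have : ht i ∈ Active ht b h S := mem_active.2 ⟨i, hi, hbi, ⟨j, hj, hbj, hc⟩, rfl⟩
      exact ⟨hmin _ this, hmax _ this⟩
    obtain ⟨i1, hi1, hbi1, ⟨j1, hj1, hbj1, hc1⟩, hh1⟩ := mem_active.1 ha1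
    obtain ⟨i2, hi2, hbi2, ⟨j2, hj2, hbj2, hc2⟩, hh2⟩ := mem_active.1 hak
    obtain ⟨s, hls, hsr, hsP, hsC, hsG⟩ := cut_left hlr hp hmeet hl
      (fun i => b i = false ∧ h < a1 + ht i)
      (fun i => (b i = true ∧ a1 ≤ ht i) ∨ (b i = false ∧ a1 + ht i ≤ h))
      (by
        rintro i hi j hj ⟨hb, hc⟩ (⟨hb', hc'⟩ | ⟨hb', hc'⟩)
        · exact ⟨by rintro rfl; simp [hb] at hb', Or.inr (by omega)⟩
        · exact ⟨by rintro rfl; omega, Or.inl (by rw [hb, hb'])⟩)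
      ⟨j1, hj1, hbj1, by omega⟩
    set S1 := S.filter (fun i => x i < s) with hS1
    set S' := S.filter (fun i => s < x i + w i) with hS'
    have m1 : ∀ i, i ∈ S1 ↔ i ∈ S ∧ x i < s := fun i => Finset.mem_filter
    have m' : ∀ i, i ∈ S' ↔ i ∈ S ∧ s < x i + w i := fun i => Finset.mem_filter
    have sub1 : S1 ⊆ S := Finset.filter_subset _ _
    have sub' : S' ⊆ S := Finset.filter_subset _ _
    obtain ⟨u, hsu, hur, huP, huC, huG⟩ := cut_right (l := s) hsr (hp.sub sub')
      (fun i hi => ⟨(hmeet i (sub' hi)).1, ((m' i).1 hi).2⟩)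
      (fun i hi j hj a a' => hsC i (sub' hi) j (sub' hj) a ((m' i).1 hi).2 a' ((m' j).1 hj).2)
      (fun i hi j hj a a' => hr i (sub' hi) j (sub' hj) a a')
      (fun i => b i = true ∧ ak ≤ ht i)
      (fun i => (b i = true ∧ ht i < ak) ∨ (b i = false ∧ h < ak + ht i))
      (by
        rintro i hi j hj ⟨hb, hc⟩ (⟨hb', hc'⟩ | ⟨hb', hc'⟩)
        · exact ⟨by rintro rfl; omega, Or.inl (by rw [hb, hb'])⟩
        · exact ⟨by rintro rfl; simp [hb] at hb', Or.inr (by omega)⟩)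
    set S2 := S'.filter (fun i => x i < u) with hS2
    set S3 := S'.filter (fun i => u < x i + w i) with hS3
    have m2 : ∀ i, i ∈ S2 ↔ i ∈ S' ∧ x i < u := fun i => Finset.mem_filter
    have m3 : ∀ i, i ∈ S3 ↔ i ∈ S' ∧ u < x i + w i := fun i => Finset.mem_filter
    have sub2 : S2 ⊆ S := (Finset.filter_subset _ _).trans sub'
    have sub3 : S3 ⊆ S := (Finset.filter_subset _ _).trans sub'
    have n1 : Sol w ht b h S1 x l s (D * ((S.image (fun i => (ht i, b i))).card - 1)) := by
      rcases Nat.eq_or_lt_of_le hls with hq | hq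
      · rw [← hq]; exact Sol.trivial hpos (hp.sub sub1) _ _
      · have hP : ∀ i ∈ S1, b i = false → h < a1 + ht i → False :=
          fun i hi e1 e2 => hsP i (sub1 hi) ((m1 i).1 hi).2 hq ⟨e1, e2⟩
        have hty := types_lt (ht := ht) (b := b) sub1 j1 hj1 (by
          intro i hi e1 e2
          exact hP i hi (by rw [e2, hbj1]) (by omega))
        refine (ih S1 l s hls (hp.sub sub1) ?_ ?_ ?_ ?_).mono (Nat.mul_le_mul_left D (by omega))
        · exact fun i hi => ⟨((m1 i).1 hi).2, (hmeet i (sub1 hi)).2⟩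
        · exact fun i hi j hj => hl i (sub1 hi) j (sub1 hj)
        · exact fun i hi j hj e1 e2 => hsC i (sub1 hi) j (sub1 hj) ((m1 i).1 hi).2 e1
            ((m1 j).1 hj).2 e2
        · refine active_lt sub1 ha1 hA ?_
          intro i hi j hj _ hbj hc he
          exact hP j hj hbj (by omega)
    have n3 : Sol w ht b h S3 x u r (D * ((S.image (fun i => (ht i, b i))).card - 1)) := by
      rcases Nat.eq_or_lt_of_le hur with hq | hq
      · rw [hq]; exact Sol.trivial hpos (hp.sub sub3) _ _
      · have hP : ∀ i ∈ S3, b i = true → ak ≤ ht i → False :=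
          fun i hi e1 e2 => huP i ((m3 i).1 hi).1 ((m3 i).1 hi).2 hq ⟨e1, e2⟩
        have hty := types_lt (ht := ht) (b := b) sub3 i2 hi2 (by
          intro i hi e1 e2
          exact hP i hi (by rw [e2, hbi2]) (by omega))
        refine (ih S3 u r hur (hp.sub sub3) ?_ ?_ ?_ ?_).mono (Nat.mul_le_mul_left D (by omega))
        · exact fun i hi => ⟨(hmeet i (sub3 hi)).1, ((m3 i).1 hi).2⟩
        · exact fun i hi j hj e1 e2 => huC i ((m3 i).1 hi).1 j ((m3 j).1 hj).1 e1 ((m3 i).1 hi).2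
            e2 ((m3 j).1 hj).2
        · exact fun i hi j hj => hr i (sub3 hi) j (sub3 hj)
        · refine active_lt sub3 hak hA ?_
          intro i hi j hj hbi _ hc he
          exact hP i hi hbi (by omega)
    have n2 : Sol w ht b h S2 x s u (S.image (fun i => (ht i, b i))).card := by
      rcases huG with hq | huG
      · rw [hq]; exact Sol.trivial hpos (hp.sub sub2) _ _
      · refine (middle (u := u) (s := s) hpos (hp.sub sub2) ?_ ?_ ?_ ?_ ?_).mono
          (Finset.card_le_card (Finset.image_subset_image sub2))
        · exact fun i hi => ⟨((m2 i).1 hi).2, ((m' i).1 ((m2 i).1 hi).1).2⟩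
        · intro e he hx hb j hj hbj
          have hg := hsG e (sub2 he) hx ((m' e).1 ((m2 e).1 he).1).2
          by_contra hcon
          exact hg (Or.inl ⟨hb, (hact e (sub2 he) j (sub2 hj) hb hbj (by omega)).1⟩)
        · intro e he hx hb i hi j hj hbi hbj hc
          have hg := hsG e (sub2 he) hx ((m' e).1 ((m2 e).1 he).1).2
          have ha := hact i (sub2 hi) j (sub2 hj) hbi hbj hc
          by_contra hcon
          exact hg (Or.inr ⟨hb, by omega⟩)
        · intro e he hx hb i hi hbi
          have hg := huG e ((m2 e).1 he).1 ((m2 e).1 he).2 hx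
          by_contra hcon
          have ha := hact i (sub2 hi) e (sub2 he) hbi hb (by omega)
          exact hg (Or.inr ⟨hb, by omega⟩)
        · intro e he hx hb i hi j hj hbi hbj hc
          have hg := huG e ((m2 e).1 he).1 ((m2 e).1 he).2 hx
          have ha := hact i (sub2 hi) j (sub2 hj) hbi hbj hc
          by_contra hcon
          exact hg (Or.inl ⟨hb, by omega⟩)
    have g1 := glue hpos hsu hur huC n2 n3
    have g2 := glue hpos hls hsr hsC n1 g1
    refine g2.mono ?_
    have hN : 1 ≤ (S.image (fun i => (ht i, b i))).card :=
      Finset.card_pos.2 ⟨_, Finset.mem_image_of_mem (fun i => (ht i, b i)) hi1⟩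
    generalize (S.image (fun i => (ht i, b i))).card = N at hN
    obtain ⟨q, rfl⟩ := Nat.exists_eq_add_of_le hN
    simp only [Nat.add_sub_cancel_left]
    nlinarith [hD1]

theorem left_border {ι : Type*} {w ht : ι → ℕ} {b : ι → Bool} {h : ℕ} {x : ι → ℕ}
    (hpos : ∀ i, 0 < w i) (hp : ∀ i j, i ≠ j → b i = b j → x i + w i ≤ x j ∨ x j + w j ≤ x i) :
    ∃ l, 1 ≤ l ∧ (∀ i, x i = 0 ∨ l ≤ x i) ∧
      (∀ i j, x i < l → l < x i + w i → x j < l → l < x j + w j → i = j) := by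
  have key : ∀ i j, x i = 0 → x j = 0 → b i = b j → i = j := by
    intro i j hi hj hb
    by_contra hne
    have := hpos i
    have := hpos j
    rcases hp i j hne hb with q | q <;> omega
  by_cases hex : ∃ i j, x i = 0 ∧ x j = 0 ∧ b i ≠ b j ∧ w i ≤ w j
  · obtain ⟨i, j, hi, hj, hb, hw⟩ := hex
    have hge : ∀ e, x e = 0 ∨ w i ≤ x e := by
      intro e
      by_cases h0 : x e = 0
      · exact Or.inl h0
      · right
        by_cases hbe : b e = b i
        · rcases hp e i (by rintro rfl; exact h0 hi) hbe with q | q <;> omega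
        · rcases hp e j (by rintro rfl; exact h0 hj) (bool_aux _ _ _ hbe (Ne.symm hb)) with
            q | q <;> omega
    refine ⟨w i, hpos i, hge, ?_⟩
    have hz : ∀ e, x e < w i → w i < x e + w e → x e = 0 ∧ b e ≠ b i := by
      intro e h1 h2
      have h0 : x e = 0 := by rcases hge e with q | q <;> omega
      refine ⟨h0, fun hbe => ?_⟩
      have := key e i h0 hi hbe
      subst this
      omega
    intro e f h1 h2 h3 h4
    exact key e f (hz e h1 h2).1 (hz f h3 h4).1
      (bool_aux _ _ _ (hz e h1 h2).2 (hz f h3 h4).2)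
  · refine ⟨1, le_rfl, fun i => by omega, ?_⟩
    intro i j h1 _ h3 _
    by_cases hb : b i = b j
    · exact key i j (by omega) (by omega) hb
    · exfalso
      apply hex
      rcases le_total (w i) (w j) with q | q
      · exact ⟨i, j, by omega, by omega, hb, q⟩
      · exact ⟨j, i, by omega, by omega, Ne.symm hb, q⟩

theorem right_border {ι : Type*} {w ht : ι → ℕ} {b : ι → Bool} {h : ℕ} {x : ι → ℕ} {W : ℕ}
    (hW : 0 < W) (hbd : ∀ i, x i + w i ≤ W)
    (hpos : ∀ i, 0 < w i) (hp : ∀ i j, i ≠ j → b i = b j → x i + w i ≤ x j ∨ x j + w j ≤ x i) :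
    ∃ r, r < W ∧ (∀ i, x i + w i = W ∨ x i + w i ≤ r) ∧
      (∀ i j, x i < r → r < x i + w i → x j < r → r < x j + w j → i = j) := by
  have key : ∀ i j, x i + w i = W → x j + w j = W → b i = b j → i = j := by
    intro i j hi hj hb
    by_contra hne
    have := hpos i
    have := hpos j
    rcases hp i j hne hb with q | q <;> omega
  by_cases hex : ∃ i j, x i + w i = W ∧ x j + w j = W ∧ b i ≠ b j ∧ x j ≤ x i
  · obtain ⟨i, j, hi, hj, hb, hw⟩ := hex
    have hge : ∀ e, x e + w e = W ∨ x e + w e ≤ x i := by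
      intro e
      by_cases h0 : x e + w e = W
      · exact Or.inl h0
      · right
        have := hbd e
        have := hpos e
        by_cases hbe : b e = b i
        · rcases hp e i (by rintro rfl; exact h0 hi) hbe with q | q <;> omega
        · rcases hp e j (by rintro rfl; exact h0 hj) (bool_aux _ _ _ hbe (Ne.symm hb)) with
            q | q <;> omega
    refine ⟨x i, by have := hpos i; omega, hge, ?_⟩
    have hz : ∀ e, x e < x i → x i < x e + w e → x e + w e = W ∧ b e ≠ b i := by
      intro e h1 h2
      have h0 : x e + w e = W := by rcases hge e with q | q <;> omega
      refine ⟨h0, fun hbe => ?_⟩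
      have := key e i h0 hi hbe
      subst this
      omega
    intro e f h1 h2 h3 h4
    exact key e f (hz e h1 h2).1 (hz f h3 h4).1
      (bool_aux _ _ _ (hz e h1 h2).2 (hz f h3 h4).2)
  · refine ⟨W - 1, by omega, fun i => by have := hbd i; omega, ?_⟩
    intro i j _ h1 _ h3
    have := hbd i
    have := hbd j
    by_cases hb : b i = b j
    · exact key i j (by omega) (by omega) hb
    · exfalso
      apply hex
      rcases le_total (x j) (x i) with q | q
      · exact ⟨i, j, by omega, by omega, hb, q⟩
      · exact ⟨j, i, by omega, by omega, Ne.symm hb, q⟩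

theorem main_aux {ι : Type*} [Fintype ι] {w ht : ι → ℕ} {b : ι → Bool} {h : ℕ} {x : ι → ℕ} {W m : ℕ}
    (hW : 0 < W) (hbd : ∀ i, x i + w i ≤ W) (hpos : ∀ i, 0 < w i)
    (hp : Packed w ht b h Finset.univ x)
    (hm : ((Finset.univ.filter (fun i => b i = true)).image ht).card ≤ m) :
    ∃ x' : ι → ℕ, (∀ i, x i = 0 ∨ x i + w i = W → x' i = x i) ∧ (∀ i, x' i + w i ≤ W) ∧
      Packed w ht b h Finset.univ x' ∧
      Grouped w ht b (Finset.univ.filter (fun i => ¬ (x i = 0 ∨ x i + w i = W))) x'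
        ((2 ^ (m + 1) - 1) * (Finset.univ.image (fun i => (ht i, b i))).card) := by
  by_cases hmov : ∃ i, ¬ (x i = 0 ∨ x i + w i = W)
  swap
  · refine ⟨x, fun _ _ => rfl, hbd, hp, fun _ => 0, fun _ => 0, ?_, ?_, ?_⟩ <;>
    · intro i hi
      exact absurd ⟨i, (Finset.mem_filter.1 hi).2⟩ hmov
  have hp' : ∀ i j, i ≠ j → b i = b j → x i + w i ≤ x j ∨ x j + w j ≤ x i :=
    fun i j hij hb => hp i (Finset.mem_univ _) j (Finset.mem_univ _) hij (Or.inl hb)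
  obtain ⟨l, hl1, hl2, hl3⟩ := left_border (ht := ht) (h := h) hpos hp'
  obtain ⟨r, hr1, hr2, hr3⟩ := right_border (ht := ht) (h := h) hW hbd hpos hp'
  have hlr : l ≤ r := by
    obtain ⟨i, hi⟩ := hmov
    have := hl2 i
    have := hr2 i
    omega
  set S : Finset ι := Finset.univ.filter (fun i => x i < r ∧ l < x i + w i) with hS
  have mS : ∀ i, i ∈ S ↔ x i < r ∧ l < x i + w i := by intro i; simp [hS]
  have hz := zone (ht := ht) (b := b) (h := h) hpos m S l r hlr
    (hp.sub (Finset.subset_univ _)) (fun i hi => (mS i).1 hi)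
    (fun i hi j hj a a' => hl3 i j a ((mS i).1 hi).2 a' ((mS j).1 hj).2)
    (fun i hi j hj a a' => hr3 i j ((mS i).1 hi).1 a ((mS j).1 hj).1 a')
    (by
      refine le_trans (Finset.card_le_card ?_) hm
      intro a ha
      obtain ⟨i, _, hb, _, rfl⟩ := mem_active.1 ha
      exact Finset.mem_image_of_mem ht (Finset.mem_filter.2 ⟨Finset.mem_univ _, hb⟩))
  obtain ⟨z, z1, z2, z3, z4⟩ := hz
  have hC : Contained w S x l r = Finset.univ.filter (fun i => ¬ (x i = 0 ∨ x i + w i = W)) := by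
    ext i
    rw [mem_contained, mS]
    simp only [Finset.mem_filter, Finset.mem_univ, true_and]
    have := hl2 i
    have := hr2 i
    have := hpos i
    omega
  have mC : ∀ i, i ∈ Contained w S x l r ↔ ¬ (x i = 0 ∨ x i + w i = W) := by
    intro i; rw [hC]; simp
  have hCS : ∀ i, i ∈ Contained w S x l r → i ∈ S := fun i hi => (mem_contained.1 hi).1
  have e1 : ∀ i, i ∉ Contained w S x l r → (if i ∈ S then z i else x i) = x i := by
    intro i hi
    by_cases q : i ∈ S
    · rw [if_pos q]; exact z1 i q hi
    · rw [if_neg q]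
  have e2 : ∀ i, i ∈ S → (if i ∈ S then z i else x i) = z i := fun i hi => if_pos hi
  refine ⟨fun i => if i ∈ S then z i else x i, ?_, ?_, ?_, ?_⟩
  · intro i hi
    exact e1 i (fun hc => (mC i).1 hc hi)
  · intro i
    show (if i ∈ S then z i else x i) + w i ≤ W
    by_cases q : i ∈ Contained w S x l r
    · rw [e2 i (hCS i q)]
      have := z2 i q
      omega
    · rw [e1 i q]; exact hbd i
  · have half : ∀ i ∈ Contained w S x l r, ∀ j, j ∉ S →
        z i + w i ≤ x j ∨ x j + w j ≤ z i := by
      intro i hi j hj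
      rw [mS] at hj
      have := z2 i hi
      omega
    intro i _ j _ hij hc
    show (if i ∈ S then z i else x i) + w i ≤ (if j ∈ S then z j else x j) ∨
      (if j ∈ S then z j else x j) + w j ≤ (if i ∈ S then z i else x i)
    by_cases qi : i ∈ S <;> by_cases qj : j ∈ S
    · rw [e2 i qi, e2 j qj]; exact z3 i qi j qj hij hc
    · by_cases ci : i ∈ Contained w S x l r
      · rw [if_pos qi, if_neg qj]; exact half i ci j qj
      · rw [e1 i ci, if_neg qj]
        exact hp i (Finset.mem_univ _) j (Finset.mem_univ _) hij hc
    · by_cases cj : j ∈ Contained w S x l r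
      · rw [if_pos qj, if_neg qi]; exact (half j cj i qi).symm
      · rw [e1 j cj, if_neg qi]
        exact hp i (Finset.mem_univ _) j (Finset.mem_univ _) hij hc
    · rw [if_neg qi, if_neg qj]
      exact hp i (Finset.mem_univ _) j (Finset.mem_univ _) hij hc
  · rw [← hC]
    refine z4.congr (fun i hi => e2 i (hCS i hi)) (Nat.mul_le_mul_left _ ?_)
    exact Finset.card_le_card (Finset.image_subset_image (Finset.subset_univ _))

theorem count_aux (k0 k G0 G N : ℕ) (h1 : k0 ≤ k) (h2 : G0 ≤ G) (h3 : k0 ≤ G0)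
    (h4 : N ≤ k0 + G0) : (2 ^ (k0 + 1) - 1) * N ≤ 6 ^ k * G := by
  have hk : 6 ^ k0 ≤ 6 ^ k := Nat.pow_le_pow_right (by norm_num) h1
  refine le_trans ?_ (Nat.mul_le_mul hk h2)
  rcases Nat.eq_zero_or_pos k0 with rfl | hpos
  · simpa using h4
  · obtain ⟨q, rfl⟩ := Nat.exists_eq_add_of_le' hpos
    have hN : N ≤ 2 * G0 := by omega
    have key : ∀ q : ℕ, 8 * 2 ^ q ≤ 6 * 6 ^ q + 2 := by
      intro q
      induction q with
      | zero => norm_num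
      | succ q ih =>
        have : 0 < 6 ^ q := by positivity
        rw [pow_succ, pow_succ]; omega
    have hcoef : (2 ^ (q + 1 + 1) - 1) * 2 ≤ 6 ^ (q + 1) := by
      have := key q
      rw [pow_succ, pow_succ, pow_succ]; omega
    calc (2 ^ (q + 1 + 1) - 1) * N ≤ (2 ^ (q + 1 + 1) - 1) * (2 * G0) := Nat.mul_le_mul_left _ hN
      _ = ((2 ^ (q + 1 + 1) - 1) * 2) * G0 := by ring
      _ ≤ 6 ^ (q + 1) * G0 := Nat.mul_le_mul_right _ hcoef


/-- Rearrangement lemma (Nadiradze–Wiese, Section 4): if every rectangle of a feasible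
packing of `[0,w]×[0,h]` touches the top or the bottom edge of the box, the heights take at
most `Γ` values, and the heights of the rectangles touching the bottom take at most `k`
values, then the rectangles can be rearranged, keeping all `y`-coordinates and the (at most
four) unmovable rectangles fixed, so that the movable rectangles form at most `6^k·Γ`
groups, each group consisting of rectangles of one common height touching a common edge and
tiling a contiguous rectangular sub-box of that height. -/
theorem rearrangement_into_subboxes
    (w h : ℕ) (hw : 0 < w) (hh : 0 < h)
    (ι : Type*) [Fintype ι] (wd ht : ι → ℕ) (hpos : ∀ i, 0 < wd i ∧ 0 < ht i)
    (x y : ι → ℕ) (hpack : IsPacking wd ht x y w h)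
    (htouch : ∀ i, y i = 0 ∨ y i + ht i = h)
    (Γ k : ℕ)
    (hΓ : (Finset.univ.image ht).card ≤ Γ)
    (hk : ((Finset.univ.filter (fun i => y i = 0)).image ht).card ≤ k) :
    ∃ (x' : ι → ℕ) (n : ℕ) (c : ι → ℕ) (X : ℕ → ℕ),
      IsPacking wd ht x' y w h ∧
      (∀ i, Unmovable w h wd ht x y i → x' i = x i) ∧
      n ≤ 6 ^ k * Γ ∧
      (∀ i, ¬Unmovable w h wd ht x y i → c i < n) ∧
      (∀ i j, ¬Unmovable w h wd ht x y i → ¬Unmovable w h wd ht x y j → c i = c j →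
        ht i = ht j ∧ (y i = 0 ↔ y j = 0)) ∧
      (∀ i j, ¬Unmovable w h wd ht x y i → ¬Unmovable w h wd ht x y j → i ≠ j →
        c i = c j → x' i + wd i ≤ x' j ∨ x' j + wd j ≤ x' i) ∧
      (∀ i, ¬Unmovable w h wd ht x y i →
        X (c i) ≤ x' i ∧
        x' i + wd i ≤ X (c i) +
          ∑ j ∈ Finset.univ.filter
            (fun j => ¬Unmovable w h wd ht x y j ∧ c j = c i), wd j) := by
  obtain ⟨hbox, hdis⟩ := hpack
  have hwp : ∀ i, 0 < wd i := fun i => (hpos i).1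
  have hbt : ∀ i, decide (y i = 0) = true ↔ y i = 0 := fun i => decide_eq_true_iff
  -- equality of edges
  have hbe : ∀ i j, decide (y i = 0) = decide (y j = 0) ↔ (y i = 0 ↔ y j = 0) :=
    fun i j => decide_eq_decide
  have hrect : ∀ (z : ι → ℕ) (i j : ι),
      RectDisjoint (z i) (y i) (wd i) (ht i) (z j) (y j) (wd j) (ht j) ↔
      ((decide (y i = 0) = decide (y j = 0) ∨ h < ht i + ht j) →
        z i + wd i ≤ z j ∨ z j + wd j ≤ z i) := by
    intro z i j
    rw [hbe]
    unfold RectDisjoint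
    have a1 := htouch i
    have a2 := htouch j
    have a3 := hpos i
    have a4 := hpos j
    have a5 := hbox i
    have a6 := hbox j
    constructor
    · intro hd hc
      omega
    · intro hd
      by_cases hc : (y i = 0 ↔ y j = 0) ∨ h < ht i + ht j
      · have := hd hc
        omega
      · omega
  have hun : ∀ i, Unmovable w h wd ht x y i ↔ (x i = 0 ∨ x i + wd i = w) := by
    intro i
    have := htouch i
    unfold Unmovable
    tauto
  have hp : Packed wd ht (fun i => decide (y i = 0)) h Finset.univ x :=
    fun i _ j _ hij => (hrect x i j).1 (hdis hij)
  have hfil : (Finset.univ.filter (fun i => decide (y i = 0) = true)) =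
      Finset.univ.filter (fun i => y i = 0) := by
    ext i; simp
  obtain ⟨x', hx1, hx2, hx3, c, X, hc1, hc2, hc3⟩ :=
    main_aux hw (fun i => (hbox i).1) hwp hp (le_of_eq (congrArg (fun s => (s.image ht).card) hfil))
  have hmem : ∀ i, i ∈ Finset.univ.filter (fun i => ¬ (x i = 0 ∨ x i + wd i = w)) ↔
      ¬ Unmovable w h wd ht x y i := by
    intro i; rw [hun]; simp
  refine ⟨x', _, c, X, ⟨fun i => ⟨hx2 i, (hbox i).2⟩, ?_⟩, ?_, ?_,
    fun i hi => hc1 i ((hmem i).2 hi), ?_, ?_, ?_⟩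
  rotate_right
  · intro i hi
    have := hc3 i ((hmem i).2 hi)
    refine ⟨this.1, this.2.trans (le_of_eq ?_)⟩
    congr 1
    refine Finset.sum_congr ?_ (fun _ _ => rfl)
    ext j
    rw [Finset.mem_filter, hmem, Finset.mem_filter]
    simp
  · intro i j hij
    exact (hrect x' i j).2 (hx3 i (Finset.mem_univ _) j (Finset.mem_univ _) hij)
  · intro i hi
    exact hx1 i ((hun i).1 hi)
  rotate_left
  · intro i j hi hj hc
    have := hc2 i ((hmem i).2 hi) j ((hmem j).2 hj) hc
    exact ⟨this.1, (hbe i j).1 this.2⟩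
  · intro i j hi hj hij hc
    have := hc2 i ((hmem i).2 hi) j ((hmem j).2 hj) hc
    exact hx3 i (Finset.mem_univ _) j (Finset.mem_univ _) hij (Or.inl this.2)
  · refine count_aux _ k _ Γ _ hk hΓ
      (Finset.card_le_card (Finset.image_subset_image (Finset.subset_univ _))) ?_
    have hsub : Finset.univ.image (fun i => (ht i, decide (y i = 0))) ⊆
        (((Finset.univ.filter (fun i => y i = 0)).image ht).image (fun a => (a, true))) ∪
        ((Finset.univ.image ht).image (fun a => (a, false))) := by
      intro v hv
      obtain ⟨i, _, rfl⟩ := Finset.mem_image.1 hv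
      rw [Finset.mem_union]
      by_cases hy : y i = 0
      · left
        refine Finset.mem_image.2 ⟨ht i, Finset.mem_image_of_mem ht ?_, ?_⟩
        · simp [hy]
        · simp [hy]
      · right
        refine Finset.mem_image.2 ⟨ht i, Finset.mem_image_of_mem ht (Finset.mem_univ _), ?_⟩
        simp [hy]
    refine (Finset.card_le_card hsub).trans ((Finset.card_union_le _ _).trans ?_)
    exact Nat.add_le_add Finset.card_image_le Finset.card_image_le
end
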